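/- arXiv:2309.10415 — 4 statements merged into one kernel-verified Lean document; each statement's English description precedes it below -/
import Mathlib

section
/- Let θ > 0 and H ∈ (0,1). There exists a positive constant C, depending only on θ and H, such that for all 0 ≤ s < t, ∫₀^s e^(θ(u−s)) ( ∫_s^t e^(θ(v−t)) (v−u)^(2H−2) dv ) du ≤ C · min(1, (t−s)^(2H−2)). -/
open MeasureTheory Real Set

/-- On positive reals the kernel `(x + y) ^ (2H - 2)` is dominated by a product of one-variable
kernels, by the inequality `x * y ≤ (x + y) ^ 2`. -/
lemma add_rpow_le_rpow_mul_rpow {H x y : ℝ} (hH : H < 1) (hx : 0 < x) (hy : 0 < y) :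
    (x + y) ^ (2 * H - 2) ≤ x ^ (H - 1) * y ^ (H - 1) := by
  rw [← mul_rpow hx.le hy.le, show 2 * H - 2 = (2 : ℕ) * (H - 1) by push_cast; ring,
    rpow_natCast_mul (by positivity)]
  exact rpow_le_rpow_of_nonpos (by positivity) (by nlinarith) (by linarith)

lemma exp_neg_mul_rpow_le {θ H T : ℝ} (hθ : 0 < θ) (hH : 0 < H) (hT : 1 ≤ T) :
    exp (-(θ * T / 2)) * T ^ H ≤ 8 / θ ^ 2 * T ^ (2 * H - 2) := by
  have hT0 : 0 < T := by linarith
  have hexp : exp (-(θ * T / 2)) ≤ 8 / θ ^ 2 * T ^ (-2 : ℝ) := by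
    have h := quadratic_le_exp_of_nonneg (x := θ * T / 2) (by positivity)
    have hpos : 0 < θ * T / 2 := by positivity
    have hsq : θ ^ 2 * T ^ 2 / 8 ≤ exp (θ * T / 2) := by nlinarith
    rw [rpow_neg hT0.le, rpow_two, exp_neg]
    refine (inv_anti₀ (by positivity) hsq).trans_eq ?_
    field_simp
  calc exp (-(θ * T / 2)) * T ^ H ≤ 8 / θ ^ 2 * T ^ (-2 : ℝ) * T ^ H := by gcongr
    _ = 8 / θ ^ 2 * T ^ (H - 2) := by
      rw [mul_assoc, ← rpow_add hT0, neg_add_eq_sub]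
    _ ≤ 8 / θ ^ 2 * T ^ (2 * H - 2) := by
      gcongr 8 / θ ^ 2 * ?_
      exact rpow_le_rpow_of_exponent_le hT (by linarith)

lemma integral_Ioo_sub_rpow {H s t : ℝ} (hH : 0 < H) (hst : s < t) :
    ∫ v in Ioo s t, (v - s) ^ (H - 1) = (t - s) ^ H / H := by
  rw [← integral_Ioc_eq_integral_Ioo, ← intervalIntegral.integral_of_le hst.le,
    intervalIntegral.integral_comp_sub_right (fun y => y ^ (H - 1)), sub_self,
    integral_rpow (Or.inl (by linarith)), sub_add_cancel, zero_rpow hH.ne', sub_zero]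

lemma integrableOn_Ioo_sub_rpow {H s t : ℝ} (hH : 0 < H) (hst : s < t) :
    IntegrableOn (fun v => (v - s) ^ (H - 1)) (Ioo s t) := by
  rw [← integrableOn_Ioc_iff_integrableOn_Ioo, ← intervalIntegrable_iff_integrableOn_Ioc_of_le
    hst.le]
  simpa using (intervalIntegral.intervalIntegrable_rpow' (a := 0) (b := t - s)
    (r := H - 1) (by linarith)).comp_sub_right s

lemma integral_Ioo_exp_le {θ s t : ℝ} (hθ : 0 < θ) (hst : s < t) :
    ∫ v in Ioo s t, exp (θ * (v - t)) ≤ 1 / θ := by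
  rw [← integral_Ioc_eq_integral_Ioo, ← intervalIntegral.integral_of_le hst.le,
    intervalIntegral.integral_comp_sub_right (fun y => exp (θ * y)),
    intervalIntegral.integral_comp_mul_left _ hθ.ne', integral_exp]
  have := exp_pos (θ * (s - t))
  simp only [sub_self, mul_zero, exp_zero, smul_eq_mul, one_div]
  exact mul_le_of_le_one_right (by positivity) (by linarith)

lemma integrableOn_Ioo_exp (θ s t : ℝ) :
    IntegrableOn (fun v => exp (θ * (v - t))) (Ioo s t) :=
  (Continuous.integrableOn_Icc (by fun_prop)).mono_set Ioo_subset_Icc_self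

lemma inner_integral_le_of_bound {θ H s t u a b : ℝ} (hθ : 0 < θ) (hH : 0 < H) (hus : u < s)
    (hst : s < t) (hb : 0 ≤ b)
    (h : ∀ v ∈ Ioo s t, exp (θ * (v - t)) * (v - u) ^ (2 * H - 2) ≤
      a * (v - s) ^ (H - 1) + b * exp (θ * (v - t))) :
    ∫ v in Ioo s t, exp (θ * (v - t)) * (v - u) ^ (2 * H - 2) ≤
      a * ((t - s) ^ H / H) + b * (1 / θ) := by
  have h₁ := (integrableOn_Ioo_sub_rpow hH hst).const_mul a
  have h₂ := (integrableOn_Ioo_exp θ s t).const_mul b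
  calc _ ≤ ∫ v in Ioo s t, (a * (v - s) ^ (H - 1) + b * exp (θ * (v - t))) := by
        refine integral_mono_of_nonneg ?_ (h₁.add h₂)
          (ae_restrict_of_forall_mem measurableSet_Ioo h)
        refine ae_restrict_of_forall_mem measurableSet_Ioo fun v hv => ?_
        exact mul_nonneg (exp_pos _).le (rpow_nonneg (by linarith [hv.1]) _)
    _ = a * ((t - s) ^ H / H) + b * ∫ v in Ioo s t, exp (θ * (v - t)) := by
        rw [integral_add h₁ h₂, integral_const_mul, integral_const_mul,
          integral_Ioo_sub_rpow hH hst]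
    _ ≤ _ := by gcongr; exact integral_Ioo_exp_le hθ hst

lemma exists_inner_integral_le {θ H : ℝ} (hθ : 0 < θ) (hH : H ∈ Ioo (0 : ℝ) 1) :
    ∃ C : ℝ, 0 < C ∧ ∀ u s t : ℝ, u < s → s < t →
      ∫ v in Ioo s t, exp (θ * (v - t)) * (v - u) ^ (2 * H - 2) ≤
        C * min 1 ((t - s) ^ (2 * H - 2)) * (1 + (s - u) ^ (H - 1)) := by
  obtain ⟨hH₀, hH₁⟩ := hH
  set A : ℝ := 1 / H with hA
  set B : ℝ := 8 / θ ^ 2 / H with hB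
  set D : ℝ := (2⁻¹ : ℝ) ^ (2 * H - 2) / θ with hD
  have hA₀ : 0 < A := by positivity
  have hB₀ : 0 < B := by positivity
  have hD₀ : 0 < D := by positivity
  refine ⟨A + B + D, by positivity, fun u s t hus hst => ?_⟩
  have hT : 0 < t - s := by linarith
  have hx : 0 < s - u := by linarith
  set X := (s - u) ^ (H - 1) with hX
  have hX₀ : 0 < X := rpow_pos_of_pos hx _
  have hprod : ∀ v ∈ Ioo s t, (v - u) ^ (2 * H - 2) ≤ X * (v - s) ^ (H - 1) := fun v hv => by
    have := add_rpow_le_rpow_mul_rpow hH₁ hx (sub_pos.2 hv.1)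
    rwa [show s - u + (v - s) = v - u by ring] at this
  rcases le_total (t - s) 1 with hT₁ | hT₁
  · rw [min_eq_left (one_le_rpow_of_pos_of_le_one_of_nonpos hT hT₁ (by linarith))]
    refine (inner_integral_le_of_bound (a := X) (b := 0) hθ hH₀ hus hst le_rfl
      fun v hv => ?_).trans ?_
    · have h₁ : exp (θ * (v - t)) ≤ 1 := exp_le_one_iff.2 (by nlinarith [hv.2])
      have h₂ : 0 ≤ (v - u) ^ (2 * H - 2) := rpow_nonneg (by linarith [hv.1]) _
      nlinarith [hprod v hv]
    · have h₁ : (t - s) ^ H / H ≤ A := by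
        rw [hA]; gcongr; exact rpow_le_one hT.le hT₁ hH₀.le
      nlinarith [mul_le_mul_of_nonneg_left h₁ hX₀.le, mul_pos hB₀ hX₀, mul_pos hD₀ hX₀]
  · rw [min_eq_right (rpow_le_one_of_one_le_of_nonpos hT₁ (by linarith))]
    set P := (t - s) ^ (2 * H - 2) with hP
    have hP₀ : 0 < P := rpow_pos_of_pos hT _
    have hhalf : (2⁻¹ * (t - s)) ^ (2 * H - 2) = (2⁻¹ : ℝ) ^ (2 * H - 2) * P :=
      mul_rpow (by norm_num) hT.le
    refine (inner_integral_le_of_bound (a := exp (-(θ * (t - s) / 2)) * X)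
      (b := (2⁻¹ * (t - s)) ^ (2 * H - 2)) hθ hH₀ hus hst (by positivity)
      fun v hv => ?_).trans ?_
    · have hy : 0 < (v - s) ^ (H - 1) := rpow_pos_of_pos (sub_pos.2 hv.1) _
      rcases le_total (v - s) (2⁻¹ * (t - s)) with hv' | hv'
      · have h₁ : exp (θ * (v - t)) ≤ exp (-(θ * (t - s) / 2)) :=
          exp_le_exp.2 (by nlinarith)
        have h₂ : exp (θ * (v - t)) * (v - u) ^ (2 * H - 2) ≤
            exp (-(θ * (t - s) / 2)) * (X * (v - s) ^ (H - 1)) :=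
          mul_le_mul h₁ (hprod v hv) (rpow_nonneg (by linarith [hv.1]) _) (exp_pos _).le
        have h₃ : 0 ≤ (2⁻¹ * (t - s)) ^ (2 * H - 2) * exp (θ * (v - t)) := by positivity
        linarith
      · have h₁ : (v - u) ^ (2 * H - 2) ≤ (2⁻¹ * (t - s)) ^ (2 * H - 2) :=
          rpow_le_rpow_of_nonpos (by positivity) (by linarith) (by linarith)
        have h₂ := mul_le_mul_of_nonneg_left h₁ (exp_pos (θ * (v - t))).le
        have h₃ : 0 ≤ exp (-(θ * (t - s) / 2)) * X * (v - s) ^ (H - 1) := by positivity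
        linarith
    · have h₁ : exp (-(θ * (t - s) / 2)) * ((t - s) ^ H / H) ≤ B * P := by
        rw [hB, ← mul_div_assoc, div_mul_eq_mul_div]
        gcongr ?_ / H
        exact exp_neg_mul_rpow_le hθ hH₀ hT₁
      have h₂ : (2⁻¹ * (t - s)) ^ (2 * H - 2) * (1 / θ) = D * P := by
        rw [hhalf, hD]; ring
      rw [h₂]
      have h₃ := mul_le_mul_of_nonneg_right h₁ hX₀.le
      have h₄ : 0 ≤ (A + B) * P + (A + D) * P * X := by positivity
      linarith

lemma integrableOn_exp_mul_one_add_rpow {θ H : ℝ} (hθ : 0 < θ) (hH : 0 < H) :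
    IntegrableOn (fun x => exp (-θ * x) * (1 + x ^ (H - 1))) (Ioi 0) := by
  have h₁ := exp_neg_integrableOn_Ioi 0 hθ
  have h₂ := integrableOn_rpow_mul_exp_neg_mul_rpow (p := 1) (s := H - 1) (b := θ)
    (by linarith) one_pos hθ
  refine (h₁.add h₂).congr_fun (fun x _ => ?_) measurableSet_Ioi
  simp only [Pi.add_apply, rpow_one]
  ring

/-- The core estimate for `|ρ₂(t,s)| ≤ C min(1,(t-s)^{2H-2})`:
`∫₀^s e^{θ(u-s)} ∫_s^t e^{θ(v-t)} (v-u)^{2H-2} dv du ≤ C ⬝ min(1, (t-s)^{2H-2})`. -/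
theorem ou_covariance_kernel_bound (θ H : ℝ) (hθ : 0 < θ) (hH : H ∈ Set.Ioo (0 : ℝ) 1) :
    ∃ C : ℝ, 0 < C ∧ ∀ s t : ℝ, 0 ≤ s → s < t →
      (∫ u in Set.Ioo (0 : ℝ) s,
        Real.exp (θ * (u - s)) *
          ∫ v in Set.Ioo s t, Real.exp (θ * (v - t)) * (v - u) ^ (2 * H - 2)) ≤
      C * min 1 ((t - s) ^ (2 * H - 2)) := by
  obtain ⟨C, hC, hinner⟩ := exists_inner_integral_le hθ hH
  set g : ℝ → ℝ := fun x => exp (-θ * x) * (1 + x ^ (H - 1)) with hg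
  have hgint : IntegrableOn g (Ioi 0) := integrableOn_exp_mul_one_add_rpow hθ hH.1
  have hg₀ : ∀ x ∈ Ioi (0 : ℝ), 0 ≤ g x := fun x hx => by
    have : (0 : ℝ) < x := hx
    positivity
  have hK : 0 ≤ ∫ x in Ioi 0, g x := setIntegral_nonneg measurableSet_Ioi hg₀
  refine ⟨C * ((∫ x in Ioi 0, g x) + 1), by positivity, fun s t hs hst => ?_⟩
  set m := min 1 ((t - s) ^ (2 * H - 2)) with hm
  have hm₀ : 0 < m := lt_min one_pos (rpow_pos_of_pos (by linarith) _)
  have hint : IntegrableOn (fun u => g (s - u)) (Ioo 0 s) := by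
    rw [← integrableOn_Ioc_iff_integrableOn_Ioo,
      ← intervalIntegrable_iff_integrableOn_Ioc_of_le hs]
    have h : IntervalIntegrable g volume 0 s :=
      (intervalIntegrable_iff_integrableOn_Ioc_of_le hs).2 (hgint.mono_set Ioc_subset_Ioi_self)
    simpa using (h.comp_sub_left s).symm
  have hval : ∫ u in Ioo 0 s, g (s - u) ≤ ∫ x in Ioi 0, g x := by
    rw [← integral_Ioc_eq_integral_Ioo, ← intervalIntegral.integral_of_le hs,
      intervalIntegral.integral_comp_sub_left g, sub_self, sub_zero,
      intervalIntegral.integral_of_le hs]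
    exact setIntegral_mono_set hgint (ae_restrict_of_forall_mem measurableSet_Ioi hg₀)
      Ioc_subset_Ioi_self.eventuallyLE
  calc _ ≤ ∫ u in Ioo 0 s, C * m * g (s - u) := by
        refine integral_mono_of_nonneg ?_ (hint.const_mul _) ?_
        · refine ae_restrict_of_forall_mem measurableSet_Ioo fun u hu => ?_
          refine mul_nonneg (exp_pos _).le (setIntegral_nonneg measurableSet_Ioo fun v hv => ?_)
          exact mul_nonneg (exp_pos _).le (rpow_nonneg (by linarith [hv.1, hu.2]) _)
        · refine ae_restrict_of_forall_mem measurableSet_Ioo fun u hu => ?_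
          refine (mul_le_mul_of_nonneg_left (hinner u s t hu.2 hst) (exp_pos _).le).trans_eq ?_
          simp only [hg]
          rw [show -θ * (s - u) = θ * (u - s) by ring]
          ring
    _ = C * m * ∫ u in Ioo 0 s, g (s - u) := integral_const_mul _ _
    _ ≤ C * m * ((∫ x in Ioi 0, g x) + 1) := by gcongr; linarith
    _ = _ := by ring
end

section
/- Let H ∈ (0, 1/2). There exists a positive constant C, depending only on H, such that for every T > 0, ∫∫_{0<s<t<T} s^(2H−1) · min(1, (t−s)^(2H−2)) dt ds ≤ C · T^(2H). -/
open MeasureTheory Real Set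

/-- The truncated power `u ↦ min 1 (u ^ r)` is integrable on the positive half-line if `r < -1`. -/
theorem integrableOn_min_one_rpow {r : ℝ} (hr : r < -1) :
    IntegrableOn (fun u : ℝ => min 1 (u ^ r)) (Ioi 0) := by
  have hm : Measurable fun u : ℝ => min 1 (u ^ r) := by fun_prop
  rw [← Ioc_union_Ioi_eq_Ioi (zero_le_one' ℝ)]
  refine IntegrableOn.union ?_ ?_
  · refine Integrable.mono' (g := fun _ => (1 : ℝ)) (integrable_const _)
      hm.aestronglyMeasurable ?_
    filter_upwards [ae_restrict_mem measurableSet_Ioc] with u hu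
    rw [Real.norm_of_nonneg (le_min zero_le_one (rpow_nonneg hu.1.le _))]
    exact min_le_left _ _
  · refine Integrable.mono' (integrableOn_Ioi_rpow_of_lt hr one_pos) hm.aestronglyMeasurable ?_
    filter_upwards [ae_restrict_mem measurableSet_Ioi] with u hu
    have hu0 : 0 ≤ u := zero_le_one.trans (mem_Ioi.1 hu).le
    rw [Real.norm_of_nonneg (le_min zero_le_one (rpow_nonneg hu0 _))]
    exact min_le_right _ _

/-- For nonnegative integrable `f` and `g`, the integral of `f s * g (t - s)` over any set of pairs
`(s, t)` is at most the product of the integrals of `f` and `g`. -/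
theorem setIntegral_mul_comp_sub_le {f g : ℝ → ℝ} (hf : Integrable f) (hg : Integrable g)
    (hf0 : ∀ x, 0 ≤ f x) (hg0 : ∀ x, 0 ≤ g x) (S : Set (ℝ × ℝ)) :
    ∫ p in S, f p.1 * g (p.2 - p.1) ≤ (∫ x, f x) * ∫ x, g x := by
  have hmp : MeasurePreserving (fun p : ℝ × ℝ => (p.1, -p.1 + p.2)) volume volume :=
    measurePreserving_prod_neg_add volume volume
  have hprod : Integrable (fun p : ℝ × ℝ => f p.1 * g p.2) volume := hf.mul_prod hg
  have hcomp : (fun p : ℝ × ℝ => f p.1 * g (p.2 - p.1)) =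
      (fun p : ℝ × ℝ => f p.1 * g p.2) ∘ fun p : ℝ × ℝ => (p.1, -p.1 + p.2) := by
    ext p
    simp [neg_add_eq_sub]
  have hint : Integrable (fun p : ℝ × ℝ => f p.1 * g (p.2 - p.1)) volume := by
    rw [hcomp]
    exact hmp.integrable_comp_of_integrable hprod
  calc ∫ p in S, f p.1 * g (p.2 - p.1)
      ≤ ∫ p : ℝ × ℝ, f p.1 * g (p.2 - p.1) :=
        setIntegral_le_integral hint (.of_forall fun p => mul_nonneg (hf0 _) (hg0 _))
    _ = ∫ p : ℝ × ℝ, f p.1 * g p.2 := by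
        rw [hcomp]
        have h := integral_map hmp.measurable.aemeasurable
          (hmp.map_eq.symm ▸ hprod.aestronglyMeasurable)
        rw [hmp.map_eq] at h
        exact h.symm
    _ = (∫ x, f x) * ∫ x, g x := integral_prod_mul f g

/-- For `H ∈ (0,1/2)` there is `C > 0` (depending only on `H`) such that for all `T > 0`,
`∫∫_{0<s<t<T} s^{2H-1} ⬝ min(1,(t-s)^{2H-2}) dt ds ≤ C ⬝ T^{2H}`. -/
theorem second_cumulant_example_bound (H : ℝ) (hH : H ∈ Set.Ioo (0 : ℝ) (1/2)) :
    ∃ C : ℝ, 0 < C ∧ ∀ T : ℝ, 0 < T →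
      (∫ p in {p : ℝ × ℝ | 0 < p.1 ∧ p.1 < p.2 ∧ p.2 < T},
        p.1 ^ (2 * H - 1) * min 1 ((p.2 - p.1) ^ (2 * H - 2))) ≤ C * T ^ (2 * H) := by
  obtain ⟨hH0, hH1⟩ := hH
  set g : ℝ → ℝ := (Ioi 0).indicator fun u => min 1 (u ^ (2 * H - 2)) with hg
  have hg0 : ∀ x, 0 ≤ g x := fun x =>
    indicator_nonneg (fun u hu => le_min zero_le_one (rpow_nonneg (mem_Ioi.1 hu).le _)) x
  have hgi : Integrable g :=
    (integrable_indicator_iff measurableSet_Ioi).2 (integrableOn_min_one_rpow (by linarith))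
  have hG : 0 ≤ ∫ x, g x := integral_nonneg hg0
  refine ⟨((∫ x, g x) + 1) / (2 * H), by positivity, fun T hT => ?_⟩
  set f : ℝ → ℝ := (Ioc 0 T).indicator fun s => s ^ (2 * H - 1) with hf
  have hf0 : ∀ x, 0 ≤ f x := fun x => indicator_nonneg (fun s hs => rpow_nonneg hs.1.le _) x
  have hfi : Integrable f := by
    rw [hf, integrable_indicator_iff measurableSet_Ioc,
      ← intervalIntegrable_iff_integrableOn_Ioc_of_le hT.le]
    exact intervalIntegral.intervalIntegrable_rpow' (by linarith)
  have hF : ∫ x, f x = T ^ (2 * H) / (2 * H) := by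
    rw [hf, integral_indicator measurableSet_Ioc, ← intervalIntegral.integral_of_le hT.le,
      integral_rpow (Or.inl (by linarith)), sub_add_cancel, zero_rpow (by positivity), sub_zero]
  have hS : MeasurableSet {p : ℝ × ℝ | 0 < p.1 ∧ p.1 < p.2 ∧ p.2 < T} :=
    (measurableSet_lt measurable_const measurable_fst).inter
      ((measurableSet_lt measurable_fst measurable_snd).inter
        (measurableSet_lt measurable_snd measurable_const))
  calc ∫ p in {p : ℝ × ℝ | 0 < p.1 ∧ p.1 < p.2 ∧ p.2 < T},
        p.1 ^ (2 * H - 1) * min 1 ((p.2 - p.1) ^ (2 * H - 2))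
      = ∫ p in {p : ℝ × ℝ | 0 < p.1 ∧ p.1 < p.2 ∧ p.2 < T}, f p.1 * g (p.2 - p.1) := by
        refine setIntegral_congr_fun hS fun p hp => ?_
        obtain ⟨h0, h1, h2⟩ := hp
        simp only [hf, hg]
        rw [indicator_of_mem (mem_Ioc.2 ⟨h0, (h1.trans h2).le⟩),
          indicator_of_mem (mem_Ioi.2 (sub_pos.2 h1))]
    _ ≤ (∫ x, f x) * ∫ x, g x := setIntegral_mul_comp_sub_le hfi hgi hf0 hg0 _
    _ ≤ (∫ x, f x) * ((∫ x, g x) + 1) :=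
        mul_le_mul_of_nonneg_left (by linarith) (integral_nonneg hf0)
    _ = ((∫ x, g x) + 1) / (2 * H) * T ^ (2 * H) := by rw [hF]; ring
end

section
/- Let H ∈ (0, 1/2). There exists a positive constant C, depending only on H and independent of T, such that for every T > 0, ∫∫∫_{0<r<s<t<T} min(1, r^(2H−2)) · min(1, (t−r)^(2H−2)) · min(1, (t−s)^(2H−2)) dr ds dt ≤ C. -/
open MeasureTheory Real Set

/-- The truncated power `min 1 (x ^ a)` is integrable on the half-line as soon as `a < -1`. -/
lemma integrableOn_Ioi_min_one_rpow {a : ℝ} (ha : a < -1) :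
    IntegrableOn (fun x : ℝ => min 1 (x ^ a)) (Ioi 0) := by
  have hmeas : Measurable fun x : ℝ => min 1 (x ^ a) := by fun_prop
  rw [← Ioc_union_Ioi_eq_Ioi zero_le_one]
  refine IntegrableOn.union ?_ ?_
  · refine Integrable.mono' (g := fun _ => (1 : ℝ)) (integrableOn_const (by simp))
      hmeas.aestronglyMeasurable ?_
    filter_upwards [ae_restrict_mem measurableSet_Ioc] with x hx
    rw [norm_of_nonneg (le_min zero_le_one (rpow_nonneg hx.1.le a))]
    exact min_le_left _ _
  · refine Integrable.mono' (integrableOn_Ioi_rpow_of_lt ha one_pos)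
      hmeas.aestronglyMeasurable ?_
    filter_upwards [ae_restrict_mem measurableSet_Ioi] with x hx
    rw [norm_of_nonneg (le_min zero_le_one (rpow_nonneg (zero_le_one.trans hx.out.le) a))]
    exact min_le_right _ _

/-- The shear `(r, s, t) ↦ (r, t - s, t - r)` turns this integral into a cube. -/
lemma lintegral_mul_sub_mul_sub {g : ℝ → ENNReal} (hg : Measurable g) :
    ∫⁻ p : ℝ × ℝ × ℝ, g p.1 * g (p.2.2 - p.1) * g (p.2.2 - p.2.1) = (∫⁻ x, g x) ^ 3 := by
  have inner (r : ℝ) : ∫⁻ q : ℝ × ℝ, g r * g (q.2 - r) * g (q.2 - q.1)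
      = g r * (∫⁻ x, g x) ^ 2 := by
    rw [Measure.volume_eq_prod, lintegral_prod_symm _ (by fun_prop)]
    calc ∫⁻ t, ∫⁻ s, g r * g (t - r) * g (t - s)
        = ∫⁻ t, g r * g (t - r) * ∫⁻ x, g x := by
          refine lintegral_congr fun t => ?_
          rw [lintegral_const_mul _ (by fun_prop), lintegral_sub_left_eq_self g t]
      _ = g r * (∫⁻ x, g x) ^ 2 := by
          rw [lintegral_mul_const _ (by fun_prop), lintegral_const_mul _ (by fun_prop),
            lintegral_sub_right_eq_self g r]
          ring
  rw [Measure.volume_eq_prod, lintegral_prod _ (by fun_prop)]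
  simp only [inner]
  rw [lintegral_mul_const _ hg]
  ring

/-- For `H ∈ (0,1/2)` there is `C > 0` (depending only on `H`, independent of `T`) with
`∫∫∫_{0<r<s<t<T} min(1,r^{2H-2}) min(1,(t-r)^{2H-2}) min(1,(t-s)^{2H-2}) dr ds dt ≤ C`
for every `T > 0`. -/
theorem third_cumulant_uniform_bound (H : ℝ) (hH : H ∈ Set.Ioo (0 : ℝ) (1/2)) :
    ∃ C : ℝ, 0 < C ∧ ∀ T : ℝ, 0 < T →
      (∫ p in {p : ℝ × ℝ × ℝ | 0 < p.1 ∧ p.1 < p.2.1 ∧ p.2.1 < p.2.2 ∧ p.2.2 < T},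
        min 1 (p.1 ^ (2 * H - 2)) * min 1 ((p.2.2 - p.1) ^ (2 * H - 2))
          * min 1 ((p.2.2 - p.2.1) ^ (2 * H - 2))) ≤ C := by
  set a := 2 * H - 2
  have ha : a < -1 := by linarith [hH.2]
  let g : ℝ → ENNReal := (Ioi 0).indicator fun x => ‖min 1 (x ^ a)‖ₑ
  have hg : Measurable g := Measurable.indicator (by fun_prop) measurableSet_Ioi
  have hpos {x : ℝ} (hx : 0 < x) : ‖min 1 (x ^ a)‖ₑ = g x :=
    (indicator_of_mem (mem_Ioi.2 hx) fun x : ℝ => ‖min 1 (x ^ a)‖ₑ).symm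
  have hfin : (∫⁻ x, g x) ^ 3 ≠ ⊤ := by
    refine ENNReal.pow_ne_top ?_
    rw [lintegral_indicator measurableSet_Ioi]
    exact (integrableOn_Ioi_min_one_rpow ha).2.ne
  refine ⟨((∫⁻ x, g x) ^ 3).toReal + 1, by positivity, fun T _ => ?_⟩
  refine le_trans ?_ (le_add_of_nonneg_right zero_le_one)
  refine (le_norm_self _).trans ?_
  rw [← toReal_enorm]
  refine ENNReal.toReal_mono hfin ((enorm_integral_le_lintegral_enorm _).trans ?_)
  rw [← lintegral_mul_sub_mul_sub hg]
  refine (setLIntegral_mono (by fun_prop) ?_).trans (setLIntegral_le_lintegral _ _)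
  rintro ⟨r, s, t⟩ ⟨hr, hrs, hst, -⟩
  dsimp only at hr hrs hst ⊢
  rw [enorm_mul, enorm_mul, hpos hr, hpos (sub_pos.2 (hrs.trans hst)), hpos (sub_pos.2 hst)]
end

section
/- Let H ∈ (0, 1/2). There exists a positive constant C, depending only on H and independent of T, such that for every T > 0, ∫∫∫∫_{0<s<t<u<v<T} min(1, s^(2H−2)) · min(1, (u−t)^(2H−2)) · min(1, (v−u)^(2H−2)) · min(1, (v−s)^(2H−2)) ds dt du dv ≤ C. -/
open MeasureTheory Real Set

/-- The truncated power `min 1 (x ^ a)` on the positive half-line, extended by zero. -/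
noncomputable def truncPow (a : ℝ) : ℝ → ENNReal :=
  (Ioi 0).indicator fun x => ENNReal.ofReal (min 1 (x ^ a))

lemma measurable_truncPow (a : ℝ) : Measurable (truncPow a) :=
  Measurable.indicator (by fun_prop) measurableSet_Ioi

lemma truncPow_of_pos (a : ℝ) {x : ℝ} (hx : 0 < x) :
    truncPow a x = ENNReal.ofReal (min 1 (x ^ a)) :=
  indicator_of_mem (mem_Ioi.2 hx) _

lemma lintegral_truncPow_lt_top {a : ℝ} (ha : a < -1) : ∫⁻ x, truncPow a x < ⊤ := by
  rw [truncPow, lintegral_indicator measurableSet_Ioi, ← Ioc_union_Ioi_eq_Ioi zero_le_one]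
  refine (lintegral_union_le _ _ _).trans_lt (ENNReal.add_lt_top.2 ⟨?_, ?_⟩)
  · calc ∫⁻ x in Ioc (0 : ℝ) 1, ENNReal.ofReal (min 1 (x ^ a))
        ≤ ∫⁻ _ in Ioc (0 : ℝ) 1, 1 :=
          lintegral_mono fun x => by simp
      _ < ⊤ := by simp
  · calc ∫⁻ x in Ioi (1 : ℝ), ENNReal.ofReal (min 1 (x ^ a))
        ≤ ∫⁻ x in Ioi (1 : ℝ), ENNReal.ofReal (x ^ a) :=
          lintegral_mono fun x => ENNReal.ofReal_le_ofReal (min_le_right _ _)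
      _ < ⊤ := (integrableOn_Ioi_rpow_of_lt ha one_pos).lintegral_lt_top

/-- The arguments `s`, `u - t`, `v - u`, `v - s` form a volume-preserving linear change of
variables, so the integral of the product factorizes. -/
lemma lintegral_mul_comp_differences {g : ℝ → ENNReal} (hg : Measurable g) :
    ∫⁻ p : ℝ × ℝ × ℝ × ℝ, g p.1 * g (p.2.2.1 - p.2.1) * g (p.2.2.2 - p.2.2.1)
      * g (p.2.2.2 - p.1) = (∫⁻ x, g x) ^ 4 := by
  have inner_t (s u v : ℝ) : ∫⁻ t, g s * g (u - t) * g (v - u) * g (v - s)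
      = g s * (∫⁻ x, g x) * g (v - s) * g (v - u) := by
    rw [lintegral_mul_const _ (by fun_prop), lintegral_mul_const _ (by fun_prop),
      lintegral_const_mul _ (by fun_prop), lintegral_sub_left_eq_self g]
    ring
  have inner_u (s v : ℝ) : ∫⁻ u, g s * (∫⁻ x, g x) * g (v - s) * g (v - u)
      = g s * (∫⁻ x, g x) ^ 2 * g (v - s) := by
    rw [lintegral_const_mul _ (by fun_prop), lintegral_sub_left_eq_self g]
    ring
  have inner_v (s : ℝ) : ∫⁻ v, g s * (∫⁻ x, g x) ^ 2 * g (v - s)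
      = g s * (∫⁻ x, g x) ^ 3 := by
    rw [lintegral_const_mul _ (by fun_prop), lintegral_sub_right_eq_self g]
    ring
  have inner (s : ℝ) : ∫⁻ q : ℝ × ℝ × ℝ, g s * g (q.2.1 - q.1) * g (q.2.2 - q.2.1)
      * g (q.2.2 - s) = g s * (∫⁻ x, g x) ^ 3 := by
    rw [Measure.volume_eq_prod, lintegral_prod_symm _ (by fun_prop)]
    simp only [inner_t]
    rw [Measure.volume_eq_prod, lintegral_prod_symm _ (by fun_prop)]
    simp only [inner_u, inner_v]
  rw [Measure.volume_eq_prod, lintegral_prod _ (by fun_prop)]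
  simp only [inner]
  rw [lintegral_mul_const _ hg]
  ring

/-- For `H ∈ (0,1/2)` there is `C > 0` (depending only on `H`, independent of `T`) with
`∫∫∫∫_{0<s<t<u<v<T} min(1,s^{2H-2}) min(1,(u-t)^{2H-2}) min(1,(v-u)^{2H-2})
  min(1,(v-s)^{2H-2}) ds dt du dv ≤ C` for every `T > 0`. -/
theorem fourth_cumulant_uniform_bound (H : ℝ) (hH : H ∈ Set.Ioo (0 : ℝ) (1/2)) :
    ∃ C : ℝ, 0 < C ∧ ∀ T : ℝ, 0 < T →
      (∫ p in {p : ℝ × ℝ × ℝ × ℝ |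
          0 < p.1 ∧ p.1 < p.2.1 ∧ p.2.1 < p.2.2.1 ∧ p.2.2.1 < p.2.2.2 ∧ p.2.2.2 < T},
        min 1 (p.1 ^ (2 * H - 2)) * min 1 ((p.2.2.1 - p.2.1) ^ (2 * H - 2))
          * min 1 ((p.2.2.2 - p.2.2.1) ^ (2 * H - 2))
          * min 1 ((p.2.2.2 - p.1) ^ (2 * H - 2))) ≤ C := by
  have ha : 2 * H - 2 < -1 := by linarith [hH.2]
  generalize 2 * H - 2 = a at ha ⊢
  have hg := measurable_truncPow a
  refine ⟨((∫⁻ x, truncPow a x) ^ 4).toReal + 1, by positivity, fun T _ => ?_⟩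
  refine le_trans ?_ (le_add_of_nonneg_right zero_le_one)
  refine (le_norm_self _).trans ((norm_integral_le_lintegral_norm _).trans ?_)
  refine ENNReal.toReal_mono (ENNReal.pow_lt_top (lintegral_truncPow_lt_top ha)).ne ?_
  rw [← lintegral_mul_comp_differences hg]
  refine (setLIntegral_mono (by fun_prop) ?_).trans (setLIntegral_le_lintegral _ _)
  rintro ⟨s, t, u, v⟩ ⟨hs, hst, htu, huv, -⟩
  dsimp only at hs hst htu huv ⊢
  have nonneg {x : ℝ} (hx : 0 < x) : 0 ≤ min 1 (x ^ a) :=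
    le_min zero_le_one (rpow_nonneg hx.le a)
  have hut := sub_pos.2 htu
  have hvu := sub_pos.2 huv
  have hvs : 0 < v - s := by linarith
  have h₁ := nonneg hs
  have h₂ := nonneg hut
  have h₃ := nonneg hvu
  have h₄ := nonneg hvs
  rw [truncPow_of_pos a hs, truncPow_of_pos a hut, truncPow_of_pos a hvu, truncPow_of_pos a hvs,
    norm_of_nonneg (by positivity), ENNReal.ofReal_mul (by positivity),
    ENNReal.ofReal_mul (by positivity), ENNReal.ofReal_mul h₁]
end
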